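/- arXiv:0708.3722 — 7 statements merged into one kernel-verified Lean document; each statement's English description precedes it below -/
import Mathlib

section
/- Sterbenz's theorem: Let β ≥ 2 be an integer radix, p ≥ 2 an integer precision, and e_min an integer minimal exponent. If x and y are p-digit radix-β floating-point numbers and y/2 ≤ x ≤ 2y, then x − y is also a p-digit radix-β floating-point number. -/
noncomputable section

/-- `x` is a `k`-digit radix-`β` floating-point number with minimal exponent `emin`:
there exist integers `m`, `e` with `|m| < β^k`, `e ≥ emin` and `x = m·β^e`. -/
def IsFPNb (β emin k : ℤ) (x : ℝ) : Prop :=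
  ∃ m e : ℤ, |(m : ℝ)| < (β : ℝ) ^ k ∧ emin ≤ e ∧ x = (m : ℝ) * (β : ℝ) ^ e

/-- Floating-point numbers are closed under negation. -/
theorem IsFPNb.neg {β emin k : ℤ} {x : ℝ} (hx : IsFPNb β emin k x) :
    IsFPNb β emin k (-x) := by
  obtain ⟨m, e, hm, he, rfl⟩ := hx
  exact ⟨-m, e, by simpa using hm, he, by push_cast; ring⟩

/-- A difference no larger in magnitude than its operand of smaller exponent is
a floating-point number. -/
theorem IsFPNb.sub_of_exponent_le {β emin k : ℤ} (hβ : 0 < β) {m n e f : ℤ}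
    (hm : |(m : ℝ)| < (β : ℝ) ^ k) (he : emin ≤ e) (hef : e ≤ f)
    (h : |(m : ℝ) * (β : ℝ) ^ e - n * (β : ℝ) ^ f| ≤ |(m : ℝ) * (β : ℝ) ^ e|) :
    IsFPNb β emin k ((m : ℝ) * (β : ℝ) ^ e - n * (β : ℝ) ^ f) := by
  have hβ' : (0 : ℝ) < β := by exact_mod_cast hβ
  obtain ⟨d, rfl⟩ := Int.le.dest hef
  have heq : (m : ℝ) * (β : ℝ) ^ e - n * (β : ℝ) ^ (e + d) =
      ((m - n * β ^ d : ℤ) : ℝ) * (β : ℝ) ^ e := by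
    rw [zpow_add₀ hβ'.ne', zpow_natCast]
    push_cast
    ring
  refine ⟨m - n * β ^ d, e, lt_of_le_of_lt ?_ hm, he, heq⟩
  rw [heq, abs_mul, abs_mul] at h
  exact le_of_mul_le_mul_right h (abs_pos.mpr (zpow_pos hβ' e).ne')

/-- Sterbenz's theorem. -/
theorem sterbenz (β p emin : ℤ) (hβ : 2 ≤ β) (hp : 2 ≤ p)
    (x y : ℝ) (hx : IsFPNb β emin p x) (hy : IsFPNb β emin p y)
    (h1 : y / 2 ≤ x) (h2 : x ≤ 2 * y) :
    IsFPNb β emin p (x - y) := by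
  have hβ' : 0 < β := by omega
  have hxy : |x - y| ≤ |x| := by
    rw [abs_of_nonneg (by linarith : 0 ≤ x), abs_le]
    constructor <;> linarith
  have hyx : |y - x| ≤ |y| := by
    rw [abs_of_nonneg (by linarith : 0 ≤ y), abs_le]
    constructor <;> linarith
  obtain ⟨m, e, hm, he, rfl⟩ := hx
  obtain ⟨n, f, hn, hf, rfl⟩ := hy
  rcases le_total e f with hef | hfe
  · exact IsFPNb.sub_of_exponent_le hβ' hm he hef hxy
  · rw [← neg_sub]
    exact (IsFPNb.sub_of_exponent_le hβ' hn hf hfe hyx).neg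
end
end

section
/- Extended Sterbenz theorem (SterbenzApprox2): Let β ≥ 2 be an integer radix, p₁, p₂ ≥ 2 integer precisions (no order between p₁ and p₂ is assumed), and e_min an integer minimal exponent. If x and y are p₁-digit radix-β floating-point numbers and y/(1 + β^(p₂−p₁)) ≤ x ≤ (1 + β^(p₂−p₁))·y, then x − y is a p₂-digit radix-β floating-point number. -/
noncomputable section

/-- If the number `x = m·β^e` with the smaller exponent satisfies `|x - y| ≤ β^(p₂ - p₁)·|x|`,
then the exponent `e` also represents `x - y` with `p₂` digits. -/
theorem isFPNb_sub_of_exponent_le {β p₁ p₂ emin m n e f : ℤ} (hβ : 0 < β)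
    (hm : |(m : ℝ)| < (β : ℝ) ^ p₁) (he : emin ≤ e) (hef : e ≤ f)
    (h : |(m : ℝ) * (β : ℝ) ^ e - n * (β : ℝ) ^ f|
      ≤ (β : ℝ) ^ (p₂ - p₁) * |(m : ℝ) * (β : ℝ) ^ e|) :
    IsFPNb β emin p₂ ((m : ℝ) * (β : ℝ) ^ e - n * (β : ℝ) ^ f) := by
  have hβ' : (0 : ℝ) < β := by exact_mod_cast hβ
  obtain ⟨d, rfl⟩ := Int.le.dest hef
  have hsub : (m : ℝ) * (β : ℝ) ^ e - n * (β : ℝ) ^ (e + d)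
      = ((m - n * β ^ d : ℤ) : ℝ) * (β : ℝ) ^ e := by
    rw [zpow_add₀ hβ'.ne', zpow_natCast]
    push_cast
    ring
  refine ⟨m - n * β ^ d, e, ?_, he, hsub⟩
  have hpos : (0 : ℝ) < (β : ℝ) ^ e := zpow_pos hβ' e
  rw [hsub, abs_mul, abs_mul, abs_of_pos hpos, ← mul_assoc] at h
  calc |((m - n * β ^ d : ℤ) : ℝ)| ≤ (β : ℝ) ^ (p₂ - p₁) * |(m : ℝ)| :=
        le_of_mul_le_mul_right h hpos
    _ < (β : ℝ) ^ (p₂ - p₁) * (β : ℝ) ^ p₁ := mul_lt_mul_of_pos_left hm (zpow_pos hβ' _)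
    _ = (β : ℝ) ^ p₂ := by rw [← zpow_add₀ hβ'.ne', sub_add_cancel]

/-- Extended Sterbenz theorem (SterbenzApprox2). -/
theorem sterbenzApprox2 (β p₁ p₂ emin : ℤ) (hβ : 2 ≤ β) (hp1 : 2 ≤ p₁) (hp2 : 2 ≤ p₂)
    (x y : ℝ) (hx : IsFPNb β emin p₁ x) (hy : IsFPNb β emin p₁ y)
    (h1 : y / (1 + (β : ℝ) ^ (p₂ - p₁)) ≤ x)
    (h2 : x ≤ (1 + (β : ℝ) ^ (p₂ - p₁)) * y) :
    IsFPNb β emin p₂ (x - y) := by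
  have hβ0 : 0 < β := by lia
  have hc : (0 : ℝ) < (β : ℝ) ^ (p₂ - p₁) := zpow_pos (by exact_mod_cast hβ0) _
  rw [div_le_iff₀ (by linarith)] at h1
  have hxy : 0 ≤ x + y := by
    by_contra! hneg
    nlinarith [mul_pos hc (neg_pos.2 hneg)]
  have hx0 : 0 ≤ x := by
    by_contra! hneg
    nlinarith [mul_pos hc (neg_pos.2 hneg)]
  have hy0 : 0 ≤ y := by
    by_contra! hneg
    nlinarith [mul_pos hc (neg_pos.2 hneg)]
  have hbound : |x - y| ≤ (β : ℝ) ^ (p₂ - p₁) * |x| ∧ |y - x| ≤ (β : ℝ) ^ (p₂ - p₁) * |y| := by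
    rw [abs_sub_comm y x, abs_of_nonneg hx0, abs_of_nonneg hy0]
    rcases le_total x y with hle | hle
    · rw [abs_of_nonpos (by linarith)]
      constructor <;> nlinarith [mul_le_mul_of_nonneg_left hle hc.le]
    · rw [abs_of_nonneg (by linarith)]
      constructor <;> nlinarith [mul_le_mul_of_nonneg_left hle hc.le]
  obtain ⟨m, e, hm, he, rfl⟩ := hx
  obtain ⟨n, f, hn, hf, rfl⟩ := hy
  rcases le_total e f with hef | hfe
  · exact isFPNb_sub_of_exponent_le hβ0 hm he hef hbound.1
  · rw [← neg_sub]
    exact (isFPNb_sub_of_exponent_le hβ0 hn hf hfe hbound.2).neg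
end
end

section
/- Correctness of the algorithm producing z (arg_reduct_exists_k_zH): Assume p > 3, x is a p-bit FPN, R is a positive normal p-bit FPN, N is an integer such that 2^(−N) is a p-bit FPN, |x·R| ≤ 2^(p−N−2) − 2^(−N), z₀ is a round-to-nearest of 3·2^(p−N−2) + x·R to p bits, z is a round-to-nearest of z₀ − 3·2^(p−N−2) to p bits, and |z| ≥ 2^(1−N). Then there exists an integer ℓ with 2 ≤ ℓ ≤ p − 2 such that z·2^N is an integer with 2^(ℓ−1) ≤ |z·2^N| < 2^ℓ, and |x·R − z| ≤ 2^(−N−1). -/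
noncomputable section

/-- `x` is a `k`-bit (binary) floating-point number with minimal exponent `emin`:
there exist integers `m`, `e` with `|m| < 2^k`, `e ≥ emin` and `x = m·2^e`. -/
def IsFPN (emin k : ℤ) (x : ℝ) : Prop :=
  ∃ m e : ℤ, |(m : ℝ)| < (2 : ℝ) ^ k ∧ emin ≤ e ∧ x = (m : ℝ) * (2 : ℝ) ^ e

/-- `x` is a normal `p`-bit floating-point number: it admits a representation
with `2^(p-1) ≤ |m| < 2^p`. -/
def IsNormalFPN (emin p : ℤ) (x : ℝ) : Prop :=
  ∃ m e : ℤ, (2 : ℝ) ^ (p - 1) ≤ |(m : ℝ)| ∧ |(m : ℝ)| < (2 : ℝ) ^ p ∧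
    emin ≤ e ∧ x = (m : ℝ) * (2 : ℝ) ^ e

/-- `r` is a round-to-nearest of `a` to `k` bits (ties broken in any way). -/
def RN (emin k : ℤ) (a r : ℝ) : Prop :=
  IsFPN emin k r ∧ ∀ y : ℝ, IsFPN emin k y → |a - r| ≤ |a - y|

/-- Unit in the last place at precision `p`: `ulp(x) = 2^(⌊log₂|x|⌋ - p + 1)`. -/
def ulp (p : ℤ) (x : ℝ) : ℝ := (2 : ℝ) ^ (Int.log 2 |x| - p + 1)

/-- If a power of two is a floating-point number, its exponent is at least `emin`. -/
lemma IsFPN.emin_le_of_two_zpow {emin k j : ℤ} (h : IsFPN emin k ((2 : ℝ) ^ j)) : emin ≤ j := by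
  obtain ⟨m, e, -, he, hj⟩ := h
  have hm : (1 : ℝ) ≤ m := by
    have hpos : (0 : ℝ) < m := by
      have : (0 : ℝ) < m * 2 ^ e := hj ▸ by positivity
      exact pos_of_mul_pos_left this (by positivity)
    exact_mod_cast hpos
  have hle : (2 : ℝ) ^ e ≤ 2 ^ j := by
    rw [hj]
    exact le_mul_of_one_le_left (by positivity) hm
  exact he.trans ((zpow_le_zpow_iff_right₀ one_lt_two).1 hle)

/-- A representable number is its own rounding. -/
lemma RN.eq_of_isFPN {emin k : ℤ} {a r : ℝ} (h : RN emin k a r) (ha : IsFPN emin k a) :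
    r = a := by
  have := h.2 a ha
  rw [sub_self, abs_zero, abs_nonpos_iff, sub_eq_zero] at this
  exact this.symm

/-- A `k`-bit number of magnitude above `2 ^ (k - 1 + j)` is an integer multiple of `2 ^ j`. -/
lemma IsFPN.exists_int_mul_two_zpow {emin k j : ℤ} {r : ℝ} (h : IsFPN emin k r)
    (hr : (2 : ℝ) ^ (k - 1 + j) < |r|) : ∃ K : ℤ, r = K * (2 : ℝ) ^ j := by
  obtain ⟨m, e, hm, -, rfl⟩ := h
  have hlt : (2 : ℝ) ^ (k - 1 + j) < 2 ^ (k + e) := by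
    rw [abs_mul, abs_of_pos (by positivity : (0 : ℝ) < 2 ^ e)] at hr
    rw [zpow_add₀ two_ne_zero k e]
    exact hr.trans (mul_lt_mul_of_pos_right hm (by positivity))
  have hje : j ≤ e := by
    have := (zpow_lt_zpow_iff_right₀ one_lt_two).1 hlt
    omega
  obtain ⟨d, rfl⟩ := Int.le.dest hje
  refine ⟨m * 2 ^ d, ?_⟩
  rw [zpow_add₀ two_ne_zero, zpow_natCast]
  push_cast
  ring

/-- If `a` lies strictly inside the binade `[2 ^ (k - 1 + j), 2 ^ (k + j)]`, at least `2 ^ j` from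
its ends, then rounding `a` to `k` bits yields a nearest integer multiple of `2 ^ j`. -/
lemma RN.exists_int_of_mem_binade {emin k j : ℤ} {a r : ℝ} (h : RN emin k a r) (hk : 1 ≤ k)
    (hj : emin ≤ j) (hlo : (2 : ℝ) ^ (k - 1 + j) + 2 ^ j ≤ a)
    (hhi : a ≤ (2 : ℝ) ^ (k + j) - 2 ^ j) :
    ∃ K : ℤ, r = K * (2 : ℝ) ^ j ∧ |a - r| ≤ 2 ^ j / 2 := by
  have hT : (0 : ℝ) < 2 ^ j := by positivity
  obtain ⟨n, rfl⟩ := Int.eq_ofNat_of_zero_le (by omega : 0 ≤ k)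
  obtain ⟨b, rfl⟩ : ∃ b : ℝ, a = b * 2 ^ j := ⟨a / 2 ^ j, by field_simp⟩
  have hb : |b - round b| ≤ 1 / 2 := abs_sub_round b
  have hb0 : 0 < b := by
    have : 0 < b * (2 : ℝ) ^ j := lt_of_lt_of_le (by positivity) hlo
    exact pos_of_mul_pos_left this hT.le
  have hbn : b ≤ 2 ^ n - 1 := by
    rw [zpow_add₀ two_ne_zero, zpow_natCast] at hhi
    refine le_of_mul_le_mul_right ?_ hT
    linarith
  have hfpn : IsFPN emin n ((round b : ℝ) * 2 ^ j) := by
    refine ⟨round b, j, ?_, hj, rfl⟩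
    rw [zpow_natCast, abs_lt]
    have := one_le_pow₀ (M₀ := ℝ) one_le_two (n := n)
    rw [abs_le] at hb
    constructor <;> linarith
  have hdist : |b * 2 ^ j - r| ≤ 2 ^ j / 2 := by
    refine (h.2 _ hfpn).trans ?_
    rw [← sub_mul, abs_mul, abs_of_pos hT]
    nlinarith
  have hr : (2 : ℝ) ^ ((n : ℤ) - 1 + j) < |r| := by
    refine lt_of_lt_of_le ?_ (le_abs_self r)
    linarith [(abs_le.1 hdist).2]
  obtain ⟨K, hK⟩ := h.1.exists_int_mul_two_zpow hr
  exact ⟨K, hK, hdist⟩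

/-- Correctness of the algorithm producing `z` (arg_reduct_exists_k_zH). -/
theorem arg_reduct_exists_k_zH (p emin N : ℤ) (hp : 3 < p)
    (x R z₀ z : ℝ)
    (hx : IsFPN emin p x)
    (hRpos : 0 < R) (hRnorm : IsNormalFPN emin p R)
    (hN : IsFPN emin p ((2 : ℝ) ^ (-N)))
    (hxR : |x * R| ≤ (2 : ℝ) ^ (p - N - 2) - (2 : ℝ) ^ (-N))
    (hz₀ : RN emin p (3 * (2 : ℝ) ^ (p - N - 2) + x * R) z₀)
    (hz : RN emin p (z₀ - 3 * (2 : ℝ) ^ (p - N - 2)) z)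
    (hzbig : (2 : ℝ) ^ (1 - N) ≤ |z|) :
    ∃ ℓ : ℤ, 2 ≤ ℓ ∧ ℓ ≤ p - 2 ∧
      (∃ k : ℤ, z * (2 : ℝ) ^ N = (k : ℝ)) ∧
      (2 : ℝ) ^ (ℓ - 1) ≤ |z * (2 : ℝ) ^ N| ∧
      |z * (2 : ℝ) ^ N| < (2 : ℝ) ^ ℓ ∧
      |x * R - z| ≤ (2 : ℝ) ^ (-N - 1) := by
  have hemin := hN.emin_le_of_two_zpow
  obtain ⟨n, hn⟩ := Int.eq_ofNat_of_zero_le (by omega : 0 ≤ p - 2)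
  obtain rfl : p = n + 2 := by omega
  have hT : (0 : ℝ) < 2 ^ (-N) := by positivity
  have hTN : (2 : ℝ) ^ (-N) * 2 ^ N = 1 := by
    rw [← zpow_add₀ two_ne_zero, neg_add_cancel, zpow_zero]
  have hC : (2 : ℝ) ^ ((n : ℤ) + 2 - N - 2) = 2 ^ n * 2 ^ (-N) := by
    rw [← zpow_natCast, ← zpow_add₀ two_ne_zero]
    congr 1
    ring
  have hlow : (2 : ℝ) ^ ((n : ℤ) + 2 - 1 + -N) = 2 * 2 ^ n * 2 ^ (-N) := by
    rw [← zpow_natCast, ← zpow_one_add₀ two_ne_zero, ← zpow_add₀ two_ne_zero]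
    congr 1
    ring
  have hhigh : (2 : ℝ) ^ ((n : ℤ) + 2 + -N) = 4 * 2 ^ n * 2 ^ (-N) := by
    rw [zpow_add₀ two_ne_zero, zpow_add₀ two_ne_zero, zpow_natCast, zpow_ofNat]
    ring
  have hhalf : (2 : ℝ) ^ (-N - 1) = 2 ^ (-N) / 2 := zpow_sub_one₀ two_ne_zero _
  have htwo : (2 : ℝ) ^ (1 - N) = 2 * 2 ^ (-N) := by
    rw [sub_eq_add_neg, zpow_one_add₀ two_ne_zero]
  rw [hC] at hxR hz₀ hz
  rw [htwo] at hzbig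
  rw [hhalf]
  have hxR' := abs_le.1 hxR
  obtain ⟨K, rfl, hdist⟩ := hz₀.exists_int_of_mem_binade (by omega) hemin
    (by rw [hlow]; linarith) (by rw [hhigh]; linarith)
  obtain ⟨k, hk⟩ : ∃ k : ℤ, k = K - 3 * 2 ^ n := ⟨_, rfl⟩
  have hkR : (k : ℝ) * 2 ^ (-N) = K * 2 ^ (-N) - 3 * (2 ^ n * 2 ^ (-N)) := by
    rw [hk]
    push_cast
    ring
  rw [← hkR] at hz
  have hdist' : |x * R - k * 2 ^ (-N)| ≤ 2 ^ (-N) / 2 := by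
    rw [hkR]
    convert hdist using 2
    ring
  have hkn : |(k : ℝ)| < 2 ^ n := by
    refine lt_of_mul_lt_mul_right ?_ hT.le
    rw [← abs_of_pos hT, ← abs_mul, abs_of_pos hT, abs_lt]
    have := abs_le.1 hdist'
    constructor <;> linarith
  have hfpn : IsFPN emin (n + 2) ((k : ℝ) * 2 ^ (-N)) := by
    refine ⟨k, -N, hkn.trans ?_, hemin, rfl⟩
    rw [← zpow_natCast]
    exact zpow_lt_zpow_right₀ one_lt_two (by omega)
  obtain rfl := hz.eq_of_isFPN hfpn
  have hk2 : (2 : ℝ) ≤ |(k : ℝ)| := by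
    rw [abs_mul, abs_of_pos hT] at hzbig
    exact le_of_mul_le_mul_right hzbig hT
  have hkN : (k : ℝ) * 2 ^ (-N) * 2 ^ N = k := by rw [mul_assoc, hTN, mul_one]
  have hkpos : 0 < |(k : ℝ)| := by linarith
  have hlog_le : (2 : ℝ) ^ Int.log 2 |(k : ℝ)| ≤ |(k : ℝ)| := by
    exact_mod_cast Int.zpow_log_le_self (b := 2) one_lt_two hkpos
  have hlt_log : |(k : ℝ)| < 2 ^ (Int.log 2 |(k : ℝ)| + 1) := by
    exact_mod_cast Int.lt_zpow_succ_log_self (b := 2) one_lt_two |(k : ℝ)|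
  refine ⟨Int.log 2 |(k : ℝ)| + 1, ?_, ?_, ⟨k, hkN⟩, ?_, ?_, hdist'⟩
  · have : (2 : ℝ) ^ (1 : ℤ) < 2 ^ (Int.log 2 |(k : ℝ)| + 1) := by
      rw [zpow_one]
      exact hk2.trans_lt hlt_log
    have := (zpow_lt_zpow_iff_right₀ one_lt_two).1 this
    omega
  · have : (2 : ℝ) ^ Int.log 2 |(k : ℝ)| < 2 ^ (n : ℤ) := by
      rw [zpow_natCast]
      exact hlog_le.trans_lt hkn
    have := (zpow_lt_zpow_iff_right₀ one_lt_two).1 this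
    omega
  · rwa [hkN, add_sub_cancel_right]
  · rwa [hkN]
end
end

section
/- First reduction step is exact (Fmac_arg_reduct_correct1): Assume p > 3, x is a p-bit FPN, R is a positive normal p-bit FPN, q is an integer with 2 ≤ q < p − 1, C₁ is a round-to-nearest of 1/R to p − q bits, C₁ is not exactly a power of 2 (C₁ ≠ 2^j for every integer j), C₁ ≥ 2^(p−q+max(1,N−1))·λ, ℓ is an integer with 2 ≤ ℓ ≤ p − 1 and q ≤ ℓ, z is a real such that z·2^N is an integer with 2^(ℓ−1) ≤ |z·2^N| < 2^ℓ, and |x·R − z| ≤ 2^(−N−1). Then x − z·C₁ is a p-bit FPN. -/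
noncomputable section

/-- A multiple of `2 ^ e` is a multiple of every smaller power `2 ^ t`. -/
lemma exists_int_mul_zpow_of_le {t e : ℤ} (h : t ≤ e) (m : ℤ) :
    ∃ n : ℤ, (m : ℝ) * (2 : ℝ) ^ e = (n : ℝ) * (2 : ℝ) ^ t := by
  obtain ⟨d, rfl⟩ := Int.le.dest h
  refine ⟨m * 2 ^ d, ?_⟩
  rw [zpow_add₀ two_ne_zero, zpow_natCast]
  push_cast
  ring

/-- If `m * 2 ^ e` has absolute value at least `2 ^ t` and `|m| < 2 ^ k`, then `t < k + e`. -/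
lemma lt_add_of_zpow_le_abs_mul_zpow {t k e : ℤ} {m : ℝ} (hm : |m| < (2 : ℝ) ^ k)
    (h : (2 : ℝ) ^ t ≤ |m * (2 : ℝ) ^ e|) : t < k + e := by
  have he : (0 : ℝ) < 2 ^ e := by positivity
  rw [abs_mul, abs_of_pos he] at h
  have : (2 : ℝ) ^ t < 2 ^ (k + e) := by
    rw [zpow_add₀ two_ne_zero]
    exact h.trans_lt (mul_lt_mul_of_pos_right hm he)
  exact (zpow_lt_zpow_iff_right₀ one_lt_two).1 this

/-- A positive `k`-bit number that is not a power of two and lies in the binade `2 ^ c` is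
`M * 2 ^ (c - k + 1)` with `2 ^ (k - 1) < M < 2 ^ k`. -/
lemma IsFPN.exists_significand {emin k c : ℤ} {C : ℝ} (hC : IsFPN emin k C)
    (hpow : C ≠ (2 : ℝ) ^ c) (hlo : (2 : ℝ) ^ c ≤ C) (hhi : C < (2 : ℝ) ^ (c + 1)) :
    ∃ M : ℤ, C = M * (2 : ℝ) ^ (c - k + 1) ∧ (2 : ℝ) ^ (k - 1) < M ∧ (M : ℝ) < (2 : ℝ) ^ k := by
  obtain ⟨m, e, hm, -, rfl⟩ := hC
  have hlt := lt_add_of_zpow_le_abs_mul_zpow hm (hlo.trans (le_abs_self _))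
  obtain ⟨M, hM⟩ := exists_int_mul_zpow_of_le (show c - k + 1 ≤ e by omega) m
  have hpos : (0 : ℝ) < 2 ^ (c - k + 1) := by positivity
  refine ⟨M, hM, lt_of_mul_lt_mul_right ?_ hpos.le, lt_of_mul_lt_mul_right ?_ hpos.le⟩
  · rw [← hM, ← zpow_add₀ two_ne_zero, show k - 1 + (c - k + 1) = c by ring]
    exact lt_of_le_of_ne hlo (Ne.symm hpow)
  · rw [← hM, ← zpow_add₀ two_ne_zero, show k + (c - k + 1) = c + 1 by ring]
    exact hhi

/-- A number at least as close to `C` as to `C + h` and to `C - h` is within `h / 2` of `C`. -/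
lemma abs_sub_le_half_of_abs_sub_le {a C h : ℝ} (hh : 0 < h)
    (h₁ : |a - C| ≤ |a - (C + h)|) (h₂ : |a - C| ≤ |a - (C - h)|) : |a - C| ≤ h / 2 := by
  have h₁' := sq_le_sq.2 h₁
  have h₂' := sq_le_sq.2 h₂
  rw [abs_le]
  constructor <;> nlinarith

/-- The rounding error of a normal result with significand `2 ^ (k - 1) < M < 2 ^ k` is at most
half a unit in the last place. -/
lemma RN.abs_sub_le_half_ulp {emin k g M : ℤ} {a : ℝ} (hk : 1 ≤ k) (hg : emin ≤ g)
    (h : RN emin k a (M * (2 : ℝ) ^ g)) (hlo : (2 : ℝ) ^ (k - 1) < M)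
    (hhi : (M : ℝ) < (2 : ℝ) ^ k) : |a - M * (2 : ℝ) ^ g| ≤ (2 : ℝ) ^ g / 2 := by
  have hM1 : (1 : ℝ) ≤ 2 ^ (k - 1) := one_le_zpow₀ one_le_two (by omega)
  refine abs_sub_le_half_of_abs_sub_le (by positivity) (h.2 _ ?_) (h.2 _ ?_)
  · rcases lt_or_ge ((M : ℝ) + 1) (2 ^ k) with hlt | hge
    · refine ⟨M + 1, g, ?_, hg, by push_cast; ring⟩
      push_cast
      rw [abs_of_pos (by linarith)]
      exact hlt
    · have hle : (M : ℝ) + 1 ≤ 2 ^ k := by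
        lift k to ℕ using by omega
        rw [zpow_natCast] at hhi ⊢
        exact_mod_cast hhi
      refine ⟨1, k + g, ?_, by omega, ?_⟩
      · simpa using one_lt_zpow₀ (one_lt_two (α := ℝ)) (show (0 : ℤ) < k by omega)
      · rw [zpow_add₀ two_ne_zero, ← hle.antisymm hge]
        push_cast
        ring
  · refine ⟨M - 1, g, ?_, hg, by push_cast; ring⟩
    push_cast
    rw [abs_of_pos (by linarith)]
    linarith

/-- A real within half a unit in the last place of `M * 2 ^ (c - k + 1)`, where
`2 ^ (k - 1) < M < 2 ^ k`, lies strictly inside the binade `2 ^ c`. -/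
lemma mem_Ioo_of_abs_sub_le_half_ulp {k c M : ℤ} {a : ℝ} (hk : 1 ≤ k)
    (hlo : (2 : ℝ) ^ (k - 1) < M) (hhi : (M : ℝ) < (2 : ℝ) ^ k)
    (h : |a - M * (2 : ℝ) ^ (c - k + 1)| ≤ (2 : ℝ) ^ (c - k + 1) / 2) :
    a ∈ Set.Ioo ((2 : ℝ) ^ c) ((2 : ℝ) ^ (c + 1)) := by
  have hpos : (0 : ℝ) < 2 ^ (c - k + 1) := by positivity
  have h₁ : (2 : ℝ) ^ c = 2 ^ (k - 1) * 2 ^ (c - k + 1) := by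
    rw [← zpow_add₀ two_ne_zero]; congr 1; ring
  have h₂ : (2 : ℝ) ^ (c + 1) = 2 ^ k * 2 ^ (c - k + 1) := by
    rw [← zpow_add₀ two_ne_zero]; congr 1; ring
  have hle : (M : ℝ) + 1 ≤ 2 ^ k := by
    lift k to ℕ using by omega
    rw [zpow_natCast] at hhi ⊢
    exact_mod_cast hhi
  have hge : (2 : ℝ) ^ (k - 1) + 1 ≤ M := by
    obtain ⟨j, hj⟩ := Int.eq_ofNat_of_zero_le (show 0 ≤ k - 1 by omega)
    rw [hj, zpow_natCast] at hlo ⊢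
    exact_mod_cast hlo
  rw [abs_le] at h
  rw [h₁, h₂]
  constructor <;> nlinarith

/-- `1 + 2 ^ (ℓ + q - p)` fits below both `2 ^ (ℓ - 1)` and `2 ^ (q + 1)`. -/
lemma one_add_zpow_le_zpow_min {p q ℓ : ℤ} (hq1 : 2 ≤ q) (hq2 : q < p - 1) (hℓ2 : ℓ ≤ p - 1)
    (hqℓ : q ≤ ℓ) : 1 + (2 : ℝ) ^ (ℓ + q - p) ≤ 2 ^ min (ℓ - 1) (q + 1) := by
  set t := min (ℓ - 1) (q + 1) with ht
  have h₁ : (1 : ℝ) ≤ 2 ^ (t - 1) := one_le_zpow₀ one_le_two (by omega)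
  have h₂ : (2 : ℝ) ^ (ℓ + q - p) ≤ 2 ^ (t - 1) := zpow_le_zpow_right₀ one_le_two (by omega)
  have h₃ : (2 : ℝ) ^ t = 2 ^ (t - 1) * 2 := by
    rw [← zpow_add_one₀ two_ne_zero]; congr 1; ring
  linarith

/-- First reduction step is exact (Fmac_arg_reduct_correct1). -/
theorem Fmac_arg_reduct_correct1 (p emin N q ℓ : ℤ) (hp : 3 < p)
    (x R C₁ z : ℝ)
    (hx : IsFPN emin p x)
    (hRpos : 0 < R) (hRnorm : IsNormalFPN emin p R)
    (hq1 : 2 ≤ q) (hq2 : q < p - 1)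
    (hC₁ : RN emin (p - q) (1 / R) C₁)
    (hC₁pow : ∀ j : ℤ, C₁ ≠ (2 : ℝ) ^ j)
    (hC₁big : (2 : ℝ) ^ (p - q + max 1 (N - 1)) * (2 : ℝ) ^ emin ≤ C₁)
    (hℓ1 : 2 ≤ ℓ) (hℓ2 : ℓ ≤ p - 1) (hqℓ : q ≤ ℓ)
    (hzint : ∃ k : ℤ, z * (2 : ℝ) ^ N = (k : ℝ))
    (hz1 : (2 : ℝ) ^ (ℓ - 1) ≤ |z * (2 : ℝ) ^ N|)
    (hz2 : |z * (2 : ℝ) ^ N| < (2 : ℝ) ^ ℓ)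
    (hclose : |x * R - z| ≤ (2 : ℝ) ^ (-N - 1)) :
    IsFPN emin p (x - z * C₁) := by
  set a := 1 / R with ha
  have hRa : R * a = 1 := by rw [ha]; field_simp
  have hC₁pos : 0 < C₁ := lt_of_lt_of_le (by positivity) hC₁big
  -- The binade `2 ^ c` of `C₁`.
  obtain ⟨c, hclo, hchi⟩ := exists_mem_Ico_zpow hC₁pos (one_lt_two (α := ℝ))
  have hc : p - q + max 1 (N - 1) + emin < c + 1 := by
    rw [← zpow_add₀ two_ne_zero] at hC₁big
    exact (zpow_lt_zpow_iff_right₀ one_lt_two).1 (hC₁big.trans_lt hchi)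
  obtain ⟨M, rfl, hMlo, hMhi⟩ := hC₁.1.exists_significand (hC₁pow c) hclo hchi
  set g := c - (p - q) + 1 with hg
  have herr := hC₁.abs_sub_le_half_ulp (by omega) (by omega) hMlo hMhi
  obtain ⟨halo, hahi⟩ := mem_Ioo_of_abs_sub_le_half_ulp (by omega) hMlo hMhi herr
  have hapos : 0 < a := lt_trans (by positivity) halo
  obtain ⟨K, hK⟩ := hzint
  have hN : (0 : ℝ) < 2 ^ (-N) := by positivity
  have hzK : z = K * 2 ^ (-N) := by
    rw [← hK, mul_assoc, ← zpow_add₀ two_ne_zero]; simp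
  rw [hK] at hz1 hz2
  have habsz : |z| = |(K : ℝ)| * 2 ^ (-N) := by rw [hzK, abs_mul, abs_of_pos hN]
  have hhalf : (2 : ℝ) ^ (-N - 1) = 2 ^ (-N) / 2 := by
    rw [zpow_sub_one₀ two_ne_zero]; ring
  have hxa : |x - z * a| ≤ 2 ^ (-N) / 2 * a := by
    rw [show x - z * a = (x * R - z) * a by linear_combination -x * hRa, abs_mul,
      abs_of_pos hapos, ← hhalf]
    gcongr
  -- The size of `x` bounds its exponent from below.
  have hxlow : (2 : ℝ) ^ (ℓ - 2 + c - N) ≤ |x| := by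
    have hℓ : (2 : ℝ) ^ (ℓ - 1) = 2 ^ (ℓ - 2) * 2 := by
      rw [← zpow_add_one₀ two_ne_zero]; congr 1; ring
    have hone : (1 : ℝ) ≤ 2 ^ (ℓ - 2) := one_le_zpow₀ one_le_two (by omega)
    have htri : |z| * a - |x| ≤ 2 ^ (-N) / 2 * a := by
      have := abs_sub_abs_le_abs_sub (z * a) x
      rw [abs_mul, abs_of_pos hapos, abs_sub_comm] at this
      exact this.trans hxa
    calc (2 : ℝ) ^ (ℓ - 2 + c - N) = 2 ^ (ℓ - 2) * 2 ^ (-N) * 2 ^ c := by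
          rw [← zpow_add₀ two_ne_zero, ← zpow_add₀ two_ne_zero]; congr 1; ring
      _ ≤ 2 ^ (ℓ - 2) * 2 ^ (-N) * a := by gcongr
      _ ≤ (|(K : ℝ)| - 1 / 2) * 2 ^ (-N) * a := by gcongr; linarith
      _ ≤ |x| := by rw [habsz] at htri; linarith
  have hdiff : |x - z * (M * 2 ^ g)| < 2 ^ (p + (min (ℓ - 1) (q + 1) + c - N - p)) := by
    calc |x - z * (M * 2 ^ g)| = |(x - z * a) + z * (a - M * 2 ^ g)| := by ring_nf
      _ ≤ |x - z * a| + |z| * |a - M * 2 ^ g| := by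
          rw [← abs_mul]; exact abs_add_le _ _
      _ ≤ 2 ^ (-N) / 2 * a + |z| * (2 ^ g / 2) := by gcongr
      _ < 2 ^ (-N) / 2 * 2 ^ (c + 1) + (2 ^ ℓ * 2 ^ (-N)) * (2 ^ g / 2) := by
          rw [habsz]; gcongr
      _ = (1 + 2 ^ (ℓ + q - p)) * 2 ^ (c - N) := by
          have h₁ : (2 : ℝ) ^ (c - N) = 2 ^ c * 2 ^ (-N) := by
            rw [← zpow_add₀ two_ne_zero]; congr 1
          have h₂ : (2 : ℝ) ^ ℓ * 2 ^ g = 2 ^ (ℓ + q - p) * 2 ^ c * 2 := by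
            rw [← zpow_add₀ two_ne_zero, ← zpow_add₀ two_ne_zero, ← zpow_add_one₀ two_ne_zero]
            congr 1; rw [hg]; ring
          rw [h₁, zpow_add_one₀ two_ne_zero]
          linear_combination (2 ^ (-N) / 2) * h₂
      _ ≤ 2 ^ min (ℓ - 1) (q + 1) * 2 ^ (c - N) := by
          gcongr; exact one_add_zpow_le_zpow_min hq1 hq2 hℓ2 hqℓ
      _ = 2 ^ (p + (min (ℓ - 1) (q + 1) + c - N - p)) := by
          rw [← zpow_add₀ two_ne_zero]; congr 1; ring
  -- A common exponent for `x` and `z * C₁`.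
  set E := max emin (min (ℓ - 1) (q + 1) + c - N - p) with hE
  obtain ⟨m, e, hm, he, rfl⟩ := hx
  have hex := lt_add_of_zpow_le_abs_mul_zpow hm hxlow
  obtain ⟨n₁, hn₁⟩ := exists_int_mul_zpow_of_le (show E ≤ e by omega) m
  obtain ⟨n₂, hn₂⟩ := exists_int_mul_zpow_of_le (show E ≤ g - N by omega) (K * M)
  have hrepr : (m : ℝ) * 2 ^ e - z * (M * 2 ^ g) = ((n₁ - n₂ : ℤ) : ℝ) * 2 ^ E := by
    have : z * (M * 2 ^ g) = ((K * M : ℤ) : ℝ) * 2 ^ (g - N) := by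
      rw [hzK, show g - N = g + -N from rfl, zpow_add₀ two_ne_zero g]; push_cast; ring
    rw [this, hn₁, hn₂]; push_cast; ring
  refine ⟨n₁ - n₂, E, ?_, le_max_left _ _, hrepr⟩
  have hEpos : (0 : ℝ) < 2 ^ E := by positivity
  rw [hrepr, abs_mul, abs_of_pos hEpos] at hdiff
  refine lt_of_mul_lt_mul_right (hdiff.trans_le ?_) hEpos.le
  rw [← zpow_add₀ two_ne_zero]
  exact zpow_le_zpow_right₀ one_le_two (by omega)
end
end

section
/- Exact second-step argument reduction (correctness of Algorithm 1): Assume p > 4, x is a p-bit FPN, R is a positive normal p-bit FPN, C₁ is a round-to-nearest of 1/R to p − 2 bits, C₁ is not exactly a power of 2, C₁ ≥ 2^(p+max(−1,p+N−2))·λ, 2^(−N) is a normal p-bit FPN, |x·R| ≤ 2^(p−N−2) − 2^(−N), z₀ is a round-to-nearest of 3·2^(p−N−2) + x·R to p bits, z is a round-to-nearest of z₀ − 3·2^(p−N−2) to p bits, C₂ is a p-bit FPN that is an integer multiple of 8·ulp∘²(C₁) and satisfies |C₂| ≤ 4·ulp(C₁). Define u = x − z·C₁ (which is a p-bit FPN,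 equal to its rounding), let v₁ be a round-to-nearest of u − z·C₂ to p bits, let p₁ be a round-to-nearest of z·C₂ to p bits and p₂ = z·C₂ − p₁, let t₁ be a round-to-nearest of u − p₁ to p bits and t₂ = (u − p₁) − t₁. Then: p₂ and t₂ are p-bit FPNs (Fast2Mult and Fast2Sum work correctly); the numbers t₁ − v₁, (t₁ − v₁) + t₂, and ((t₁ − v₁) + t₂) − p₂ are all p-bit FPNs (so the computation v₂ = ∘(∘(∘(t₁ − v₁) + t₂) − p₂) commits no rounding error and v₂ = t₁ − v₁ + t₂ − p₂ exactly); and v₁ + v₂ = x − z·C₁ − z·C₂ exactly. -/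
noncomputable section

/-- `x` is an integer multiple of `2 ^ g`. -/
def IsGridPoint (g : ℤ) (x : ℝ) : Prop := ∃ n : ℤ, x = (n : ℝ) * (2 : ℝ) ^ g

namespace IsGridPoint

variable {g h : ℤ} {a b : ℝ}

lemma sub (ha : IsGridPoint g a) (hb : IsGridPoint g b) : IsGridPoint g (a - b) := by
  obtain ⟨m, rfl⟩ := ha
  obtain ⟨n, rfl⟩ := hb
  exact ⟨m - n, by push_cast; ring⟩

lemma add (ha : IsGridPoint g a) (hb : IsGridPoint g b) : IsGridPoint g (a + b) := by
  obtain ⟨m, rfl⟩ := ha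
  obtain ⟨n, rfl⟩ := hb
  exact ⟨m + n, by push_cast; ring⟩

lemma mul (ha : IsGridPoint g a) (hb : IsGridPoint h b) : IsGridPoint (g + h) (a * b) := by
  obtain ⟨m, rfl⟩ := ha
  obtain ⟨n, rfl⟩ := hb
  exact ⟨m * n, by rw [zpow_add₀ two_ne_zero]; push_cast; ring⟩

lemma two_zpow (hgh : g ≤ h) : IsGridPoint g ((2 : ℝ) ^ h) := by
  refine ⟨2 ^ (h - g).toNat, ?_⟩
  push_cast
  rw [← zpow_natCast, Int.toNat_of_nonneg (by omega), ← zpow_add₀ two_ne_zero]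
  congr 1
  ring

lemma mono (hgh : g ≤ h) (ha : IsGridPoint h a) : IsGridPoint g a := by
  obtain ⟨m, rfl⟩ := ha
  obtain ⟨n, hn⟩ := two_zpow hgh
  exact ⟨m * n, by rw [hn]; push_cast; ring⟩

lemma two_zpow_le (ha : IsGridPoint g a) (hpos : 0 < a) : (2 : ℝ) ^ g ≤ a := by
  obtain ⟨m, rfl⟩ := ha
  have hg : (0 : ℝ) < 2 ^ g := by positivity
  have hm : (0 : ℝ) < m := pos_of_mul_pos_left hpos hg.le
  have hm' : (1 : ℝ) ≤ m := by exact_mod_cast hm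
  nlinarith

lemma two_zpow_le_abs (ha : IsGridPoint g a) (hne : a ≠ 0) : (2 : ℝ) ^ g ≤ |a| := by
  rcases abs_cases a with ⟨h, -⟩ | ⟨h, -⟩ <;> rw [h]
  · exact ha.two_zpow_le (lt_of_le_of_ne (h ▸ abs_nonneg a) hne.symm)
  · refine two_zpow_le ?_ (lt_of_le_of_ne (h ▸ abs_nonneg a) (neg_ne_zero.2 hne).symm)
    obtain ⟨m, rfl⟩ := ha
    exact ⟨-m, by push_cast; ring⟩

lemma isFPN {emin k : ℤ} (ha : IsGridPoint g a) (hk : 0 < k) (hg : emin ≤ g)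
    (hle : |a| ≤ (2 : ℝ) ^ (g + k)) : IsFPN emin k a := by
  have h1 : (1 : ℝ) < 2 ^ k := one_lt_zpow₀ one_lt_two hk
  have hgpos : (0 : ℝ) < 2 ^ g := by positivity
  rcases hle.lt_or_eq with hlt | heq
  · obtain ⟨m, rfl⟩ := ha
    refine ⟨m, g, ?_, hg, rfl⟩
    rw [abs_mul, abs_of_pos hgpos, zpow_add₀ two_ne_zero, mul_comm] at hlt
    exact lt_of_mul_lt_mul_left hlt hgpos.le
  · rcases (abs_eq (by positivity)).1 heq with h | h
    · exact ⟨1, g + k, by simpa using h1, by omega, by simpa using h⟩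
    · exact ⟨-1, g + k, by simpa using h1, by omega, by simpa using h⟩

end IsGridPoint

lemma IsFPN.isGridPoint {emin k j : ℤ} {x : ℝ} (hx : IsFPN emin k x) (hj : (2 : ℝ) ^ j ≤ |x|) :
    IsGridPoint (j - k + 1) x := by
  obtain ⟨m, e, hm, -, rfl⟩ := hx
  have hepos : (0 : ℝ) < 2 ^ e := by positivity
  have hlt : (2 : ℝ) ^ j < 2 ^ (k + e) := by
    rw [zpow_add₀ two_ne_zero]
    rw [abs_mul, abs_of_pos hepos] at hj
    exact hj.trans_lt (mul_lt_mul_of_pos_right hm hepos)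
  have := (zpow_lt_zpow_iff_right₀ (one_lt_two (α := ℝ))).1 hlt
  exact IsGridPoint.mono (by omega) ⟨m, rfl⟩

namespace RN

variable {emin k : ℤ} {a r : ℝ}

lemma eq_of_isFPN_s5 (h : RN emin k a r) (ha : IsFPN emin k a) : r = a := by
  have := h.2 a ha
  rw [sub_self, abs_zero] at this
  exact (sub_eq_zero.1 (abs_nonpos_iff.1 this)).symm

lemma abs_sub_le (h : RN emin k a r) (hk : 0 < k) {j : ℤ} (hj : emin ≤ j)
    (ha : |a| ≤ (2 : ℝ) ^ (j + k)) : |a - r| ≤ (2 : ℝ) ^ (j - 1) := by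
  have hjpos : (0 : ℝ) < 2 ^ j := by positivity
  have hround : |a / 2 ^ j - round (a / 2 ^ j)| ≤ 1 / 2 := abs_sub_round _
  have hbound : |a / 2 ^ j| ≤ 2 ^ k := by
    rw [abs_div, abs_of_pos hjpos, div_le_iff₀ hjpos, mul_comm, ← zpow_add₀ two_ne_zero]
    exact ha
  have hn : |(round (a / 2 ^ j) : ℝ)| ≤ 2 ^ k := by
    obtain ⟨n, hn⟩ := IsGridPoint.two_zpow hk.le
    rw [zpow_zero, mul_one] at hn
    rw [hn] at hbound ⊢
    obtain ⟨h1, h2⟩ := abs_le.1 hbound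
    obtain ⟨h3, h4⟩ := abs_le.1 hround
    have h5 : (round (a / 2 ^ j) : ℝ) < (n + 1 : ℤ) := by push_cast; linarith
    have h6 : ((-n - 1 : ℤ) : ℝ) < round (a / 2 ^ j) := by push_cast; linarith
    have h7 : round (a / 2 ^ j) < n + 1 := by exact_mod_cast h5
    have h8 : -n - 1 < round (a / 2 ^ j) := by exact_mod_cast h6
    have h9 : |round (a / 2 ^ j)| ≤ n := abs_le.2 ⟨by omega, by omega⟩
    exact_mod_cast h9
  refine (h.2 (round (a / 2 ^ j) * 2 ^ j) (IsGridPoint.isFPN ⟨_, rfl⟩ hk hj ?_)).trans ?_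
  · rw [abs_mul, abs_of_pos hjpos, zpow_add₀ two_ne_zero, mul_comm]
    exact mul_le_mul_of_nonneg_left hn hjpos.le
  · have : a - round (a / 2 ^ j) * 2 ^ j = (a / 2 ^ j - round (a / 2 ^ j)) * 2 ^ j := by
      field_simp
    rw [this, abs_mul, abs_of_pos hjpos, zpow_sub_one₀ two_ne_zero]
    nlinarith

lemma isGridPoint (h : RN emin k a r) (hk : 0 < k) {g : ℤ} (hg : emin ≤ g)
    (ha : IsGridPoint g a) : IsGridPoint g r := by
  rcases le_total |a| ((2 : ℝ) ^ (g + k)) with hle | hle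
  · rwa [h.eq_of_isFPN_s5 (ha.isFPN hk hg hle)]
  · have hpos : (0 : ℝ) < 2 ^ (g + k) := by positivity
    have hpow := IsGridPoint.two_zpow (show g ≤ g + k by omega)
    have hr : (2 : ℝ) ^ (g + k) ≤ |r| := by
      rcases abs_cases a with ⟨ha', -⟩ | ⟨ha', -⟩
      · have := h.2 _ (hpow.isFPN hk hg (abs_of_pos hpos).le)
        rw [abs_of_nonneg (by linarith : 0 ≤ a - 2 ^ (g + k))] at this
        linarith [le_abs_self (a - r), le_abs_self r]
      · have hneg : IsGridPoint g (-(2 : ℝ) ^ (g + k)) := by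
          simpa using (IsGridPoint.sub hpow hpow).sub hpow
        have := h.2 _ (hneg.isFPN hk hg (by rw [abs_neg, abs_of_pos hpos]))
        rw [abs_of_nonpos (by linarith : a - -2 ^ (g + k) ≤ 0)] at this
        linarith [neg_abs_le (a - r), neg_abs_le r]
    exact (h.1.isGridPoint hr).mono (by omega)

/-- The rounding error stays below half the gap on each side when the neighbours of `r` at
distance `d` are representable. -/
lemma abs_sub_le_half (h : RN emin k a r) {d : ℝ} (hd : 0 < d)
    (hadd : IsFPN emin k (r + d)) (hsub : IsFPN emin k (r - d)) : |a - r| ≤ d / 2 := by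
  have h1 := sq_le_sq.2 (h.2 _ hadd)
  have h2 := sq_le_sq.2 (h.2 _ hsub)
  refine abs_le.2 ⟨?_, ?_⟩ <;> nlinarith

end RN

lemma IsNormalFPN.le_of_two_zpow {emin p j : ℤ} (h : IsNormalFPN emin p ((2 : ℝ) ^ j)) :
    emin + p - 1 ≤ j := by
  obtain ⟨m, e, hm, -, he, hj⟩ := h
  have hepos : (0 : ℝ) < 2 ^ e := by positivity
  have hjpos : (0 : ℝ) < 2 ^ j := by positivity
  have : (2 : ℝ) ^ (p - 1 + e) ≤ 2 ^ j := by
    rw [← abs_of_pos hjpos, hj, abs_mul, abs_of_pos hepos, zpow_add₀ two_ne_zero]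
    exact mul_le_mul_of_nonneg_right hm hepos.le
  have := (zpow_le_zpow_iff_right₀ (one_lt_two (α := ℝ))).1 this
  omega

lemma ulp_ulp (p : ℤ) (x : ℝ) : ulp p (ulp p x) = (2 : ℝ) ^ (Int.log 2 |x| - 2 * p + 2) := by
  have hlog (j : ℤ) : Int.log 2 |(2 : ℝ) ^ j| = j := by
    rw [abs_of_pos (by positivity)]
    exact_mod_cast Int.log_zpow (R := ℝ) (b := 2) (by norm_num) j
  unfold ulp
  rw [hlog]
  congr 1
  ring

/-- Adding and subtracting `3 · 2 ^ (p - N - 2)` rounds `a` to the nearest multiple of `2 ^ (-N)`. -/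
lemma rounding_by_magic_constant {p emin N : ℤ} (hp : 4 < p) {a z₀ z : ℝ} (hN : emin ≤ -N)
    (ha : |a| ≤ (2 : ℝ) ^ (p - N - 2) - (2 : ℝ) ^ (-N))
    (hz₀ : RN emin p (3 * (2 : ℝ) ^ (p - N - 2) + a) z₀)
    (hz : RN emin p (z₀ - 3 * (2 : ℝ) ^ (p - N - 2)) z) :
    IsGridPoint (-N) z ∧ |a - z| ≤ (2 : ℝ) ^ (-N - 1) ∧ |z| ≤ (2 : ℝ) ^ (p - N - 2) := by
  have hpow : (2 : ℝ) ^ (-N + p) = 4 * 2 ^ (p - N - 2) := by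
    rw [show -N + p = p - N - 2 + 2 by ring, zpow_add₀ two_ne_zero]
    norm_num [mul_comm]
  have hpow' : (2 : ℝ) ^ (p - N - 1) = 2 * 2 ^ (p - N - 2) := by
    rw [show p - N - 1 = p - N - 2 + 1 by ring, zpow_add₀ two_ne_zero]
    norm_num [mul_comm]
  have hhalf : (2 : ℝ) ^ (-N - 1) = 2 ^ (-N) / 2 := by
    rw [zpow_sub_one₀ two_ne_zero]; ring
  have hNpos : (0 : ℝ) < 2 ^ (-N) := by positivity
  have hMpos : (0 : ℝ) < 2 ^ (p - N - 2) := by positivity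
  obtain ⟨ha1, ha2⟩ := abs_le.1 ha
  have herr := hz₀.abs_sub_le (by omega) hN (by
    rw [hpow]; exact abs_le.2 ⟨by linarith, by linarith⟩)
  rw [hhalf] at herr
  obtain ⟨he1, he2⟩ := abs_le.1 herr
  have hgrid : IsGridPoint (-N) z₀ :=
    (hz₀.1.isGridPoint (j := p - N - 1) (by
      rw [hpow']; exact le_trans (by linarith) (le_abs_self z₀))).mono (by omega)
  have hM : IsGridPoint (-N) ((2 : ℝ) ^ (p - N - 2)) := IsGridPoint.two_zpow (by omega)
  have hgrid' : IsGridPoint (-N) (z₀ - 3 * 2 ^ (p - N - 2)) := by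
    have := ((hgrid.sub hM).sub hM).sub hM
    ring_nf at this ⊢
    exact this
  have hz' : z = z₀ - 3 * 2 ^ (p - N - 2) := hz.eq_of_isFPN_s5 <| hgrid'.isFPN (by omega) hN (by
    rw [hpow]; exact abs_le.2 ⟨by linarith, by linarith⟩)
  refine ⟨hz' ▸ hgrid', ?_, ?_⟩
  · rw [hz', hhalf]; exact abs_le.2 ⟨by linarith, by linarith⟩
  · rw [hz']; exact abs_le.2 ⟨by linarith, by linarith⟩

/-- All error terms are multiples of `2 ^ g`, so they are representable as soon as `u` and the
product `b` are multiples of `2 ^ g` bounded by `2 ^ (g + 2 * p - 3)`. -/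
lemma isFPN_error_terms {p emin g : ℤ} (hp : 4 < p) (hg : emin ≤ g) {u b v₁ p₁ t₁ : ℝ}
    (hugrid : IsGridPoint g u) (hbgrid : IsGridPoint g b)
    (hu : |u| ≤ (2 : ℝ) ^ (g + 2 * p - 3)) (hb : |b| ≤ (2 : ℝ) ^ (g + 2 * p - 4))
    (hv₁ : RN emin p (u - b) v₁) (hp₁ : RN emin p b p₁) (ht₁ : RN emin p (u - p₁) t₁) :
    IsFPN emin p (b - p₁) ∧ IsFPN emin p (u - p₁ - t₁) ∧ IsFPN emin p (t₁ - v₁) ∧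
    IsFPN emin p (t₁ - v₁ + (u - p₁ - t₁)) ∧
    IsFPN emin p (t₁ - v₁ + (u - p₁ - t₁) - (b - p₁)) := by
  have hp0 : 0 < p := by omega
  set W : ℝ := (2 : ℝ) ^ (g + p - 5)
  have hWpos : 0 < W := by positivity
  have hscale (j : ℤ) : (2 : ℝ) ^ (g + p - 5 + j) = W * 2 ^ j := zpow_add₀ two_ne_zero _ _
  set V : ℝ := (2 : ℝ) ^ (g + 2 * p - 4) with hV
  have hWV : W ≤ V := zpow_le_zpow_right₀ one_le_two (by omega)
  have hV2 : (2 : ℝ) ^ (g + 2 * p - 3) = 2 * V := by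
    rw [show g + 2 * p - 3 = g + 2 * p - 4 + 1 by ring, zpow_add_one₀ two_ne_zero, mul_comm]
  have hV4 : (2 : ℝ) ^ (g + p - 2 + p) = 4 * V := by
    rw [show g + p - 2 + p = g + 2 * p - 4 + 2 by ring, zpow_add₀ two_ne_zero]
    norm_num [mul_comm, hV]
  rw [hV2] at hu
  have hlim : (2 : ℝ) ^ (g + p) = 32 * W := by
    rw [show g + p = g + p - 5 + 5 by ring, hscale]; norm_num [mul_comm]
  have herr : (2 : ℝ) ^ (g + p - 2 - 1) = 4 * W := by
    rw [show g + p - 2 - 1 = g + p - 5 + 2 by ring, hscale]; norm_num [mul_comm]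
  obtain ⟨hu1, hu2⟩ := abs_le.1 hu
  obtain ⟨hb1, hb2⟩ := abs_le.1 hb
  have ep : |b - p₁| ≤ W := by
    have := hp₁.abs_sub_le hp0 (j := g + p - 4) (by omega) (by
      rwa [show g + p - 4 + p = g + 2 * p - 4 by ring])
    rwa [show g + p - 4 - 1 = g + p - 5 by ring] at this
  obtain ⟨ep1, ep2⟩ := abs_le.1 ep
  have ev : |u - b - v₁| ≤ 4 * W := herr ▸ hv₁.abs_sub_le hp0 (by omega) (by
    rw [hV4]; exact abs_le.2 ⟨by linarith, by linarith⟩)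
  have et : |u - p₁ - t₁| ≤ 4 * W := herr ▸ ht₁.abs_sub_le hp0 (by omega) (by
    rw [hV4]; exact abs_le.2 ⟨by linarith, by linarith⟩)
  obtain ⟨ev1, ev2⟩ := abs_le.1 ev
  obtain ⟨et1, et2⟩ := abs_le.1 et
  have gp := hp₁.isGridPoint hp0 hg hbgrid
  have gv := hv₁.isGridPoint hp0 hg (hugrid.sub hbgrid)
  have gt := ht₁.isGridPoint hp0 hg (hugrid.sub gp)
  have fpn {y : ℝ} (hy : IsGridPoint g y) (h1 : -(32 * W) ≤ y) (h2 : y ≤ 32 * W) :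
      IsFPN emin p y := hy.isFPN hp0 hg (by rw [hlim]; exact abs_le.2 ⟨h1, h2⟩)
  have gt₂ := (hugrid.sub gp).sub gt
  have gs := (gt.sub gv).add gt₂
  exact ⟨fpn (hbgrid.sub gp) (by linarith) (by linarith), fpn gt₂ (by linarith) (by linarith),
    fpn (gt.sub gv) (by linarith) (by linarith), fpn gs (by linarith) (by linarith),
    fpn (gs.sub (hbgrid.sub gp)) (by linarith) (by linarith)⟩

/-- Rounding error and lower bound for a value rounded to a number in the open binade
`(2 ^ c, 2 ^ (c + 1))`. -/
lemma RN.of_mem_binade {emin k c : ℤ} {a r : ℝ} (h : RN emin k a r) (hk : 0 < k)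
    (hc : emin ≤ c - k + 1) (hlow : (2 : ℝ) ^ c < r) (hupp : r < (2 : ℝ) ^ (c + 1)) :
    IsGridPoint (c - k + 1) r ∧ |a - r| ≤ (2 : ℝ) ^ (c - k) ∧ (2 : ℝ) ^ c ≤ a ∧
      a ≤ (2 : ℝ) ^ (c + 1) := by
  have hcpos : (0 : ℝ) < 2 ^ c := by positivity
  have hdpos : (0 : ℝ) < 2 ^ (c - k + 1) := by positivity
  have hgrid : IsGridPoint (c - k + 1) r := h.1.isGridPoint (hlow.le.trans (le_abs_self r))
  have h1 := (hgrid.sub (IsGridPoint.two_zpow (h := c) (by omega))).two_zpow_le (by linarith)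
  have h2 := ((IsGridPoint.two_zpow (h := c + 1) (by omega)).sub hgrid).two_zpow_le (by linarith)
  have hd := IsGridPoint.two_zpow (le_refl (c - k + 1))
  have hexp : c - k + 1 + k = c + 1 := by ring
  have herr := h.abs_sub_le_half hdpos
    ((hgrid.add hd).isFPN hk hc (by rw [hexp]; exact abs_le.2 ⟨by linarith, by linarith⟩))
    ((hgrid.sub hd).isFPN hk hc (by rw [hexp]; exact abs_le.2 ⟨by linarith, by linarith⟩))
  have hhalf : (2 : ℝ) ^ (c - k + 1) / 2 = 2 ^ (c - k) := by
    rw [zpow_add_one₀ two_ne_zero]; ring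
  obtain ⟨e1, e2⟩ := abs_le.1 herr
  exact ⟨hgrid, hhalf ▸ herr, by linarith, by linarith⟩

/-- Exact second-step argument reduction (correctness of Algorithm 1). -/
theorem super_accurate_second_step (p emin N : ℤ) (hp : 4 < p)
    (x R C₁ C₂ z₀ z u v₁ p₁ p₂ t₁ t₂ : ℝ)
    (hx : IsFPN emin p x)
    (hRpos : 0 < R) (hRnorm : IsNormalFPN emin p R)
    (hC₁ : RN emin (p - 2) (1 / R) C₁)
    (hC₁pow : ∀ j : ℤ, C₁ ≠ (2 : ℝ) ^ j)
    (hC₁big : (2 : ℝ) ^ (p + max (-1) (p + N - 2)) * (2 : ℝ) ^ emin ≤ C₁)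
    (hN : IsNormalFPN emin p ((2 : ℝ) ^ (-N)))
    (hxR : |x * R| ≤ (2 : ℝ) ^ (p - N - 2) - (2 : ℝ) ^ (-N))
    (hz₀ : RN emin p (3 * (2 : ℝ) ^ (p - N - 2) + x * R) z₀)
    (hz : RN emin p (z₀ - 3 * (2 : ℝ) ^ (p - N - 2)) z)
    (hC₂fpn : IsFPN emin p C₂)
    (hC₂mult : ∃ k : ℤ, C₂ = (k : ℝ) * (8 * ulp p (ulp p C₁)))
    (hC₂small : |C₂| ≤ 4 * ulp p C₁)
    (hu : u = x - z * C₁)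
    (hv₁ : RN emin p (u - z * C₂) v₁)
    (hp₁ : RN emin p (z * C₂) p₁)
    (hp₂ : p₂ = z * C₂ - p₁)
    (ht₁ : RN emin p (u - p₁) t₁)
    (ht₂ : t₂ = (u - p₁) - t₁) :
    IsFPN emin p p₂ ∧ IsFPN emin p t₂ ∧
    IsFPN emin p (t₁ - v₁) ∧
    IsFPN emin p ((t₁ - v₁) + t₂) ∧
    IsFPN emin p (((t₁ - v₁) + t₂) - p₂) ∧
    v₁ + (((t₁ - v₁) + t₂) - p₂) = x - z * C₁ - z * C₂ := by
  have hNemin := hN.le_of_two_zpow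
  obtain ⟨hzgrid, hzerr, hzle⟩ := rounding_by_magic_constant hp (by omega) hxR hz₀ hz
  have hexact : v₁ + (((t₁ - v₁) + t₂) - p₂) = x - z * C₁ - z * C₂ := by
    rw [ht₂, hp₂, hu]; ring
  suffices hterms : IsFPN emin p (z * C₂ - p₁) ∧ IsFPN emin p (u - p₁ - t₁) ∧
      IsFPN emin p (t₁ - v₁) ∧ IsFPN emin p (t₁ - v₁ + (u - p₁ - t₁)) ∧
      IsFPN emin p (t₁ - v₁ + (u - p₁ - t₁) - (z * C₂ - p₁)) by
    obtain ⟨h1, h2, h3, h4, h5⟩ := hterms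
    rw [← ht₂] at h2 h4 h5
    rw [← hp₂] at h1 h5
    exact ⟨h1, h2, h3, h4, h5, hexact⟩
  by_cases hz0 : z = 0
  · have hzero : IsFPN emin p 0 :=
      ⟨0, emin, by rw [Int.cast_zero, abs_zero]; positivity, le_rfl, by simp⟩
    simp only [hz0, zero_mul, sub_zero] at hu hp₁ hv₁ ⊢
    have hp₁0 := hp₁.eq_of_isFPN_s5 hzero
    rw [hp₁0, sub_zero] at ht₁ ⊢
    rw [← hu] at hx
    rw [ht₁.eq_of_isFPN_s5 hx, hv₁.eq_of_isFPN_s5 hx]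
    simpa using hzero
  have hC₁pos : 0 < C₁ := lt_of_lt_of_le (by positivity) hC₁big
  set c := Int.log 2 C₁ with hcdef
  have hcle : p + max (-1) (p + N - 2) + emin ≤ c := by
    rw [← zpow_add₀ two_ne_zero] at hC₁big
    exact (Int.zpow_le_iff_le_log (b := 2) (by norm_num) hC₁pos).1 (by exact_mod_cast hC₁big)
  have hc1 : p - 1 + emin ≤ c := by omega
  have hc2 : 2 * p + N - 2 + emin ≤ c := by omega
  have hlow : (2 : ℝ) ^ c < C₁ := lt_of_le_of_ne
    (by exact_mod_cast Int.zpow_log_le_self (b := 2) (by norm_num) hC₁pos) (hC₁pow c).symm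
  have hupp : C₁ < (2 : ℝ) ^ (c + 1) := by
    exact_mod_cast Int.lt_zpow_succ_log_self (b := 2) (by norm_num) C₁
  obtain ⟨hC₁grid, hC₁err, hRlow, hRupp⟩ :=
    hC₁.of_mem_binade (by omega) (by omega) hlow hupp
  have hC₂grid : IsGridPoint (c - 2 * p + 5) C₂ := by
    obtain ⟨k, rfl⟩ := hC₂mult
    refine ⟨k, ?_⟩
    rw [ulp_ulp, abs_of_pos hC₁pos, ← hcdef,
      show c - 2 * p + 5 = c - 2 * p + 2 + 3 by ring, zpow_add₀ two_ne_zero _ 3]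
    norm_num [mul_comm]
  have hC₂le : |C₂| ≤ (2 : ℝ) ^ (c - p + 3) := by
    refine hC₂small.trans_eq ?_
    rw [ulp, abs_of_pos hC₁pos, ← hcdef, show c - p + 3 = c - p + 1 + 2 by ring,
      zpow_add₀ two_ne_zero _ 2]
    norm_num [mul_comm]
  have hxeq : x = x * R * (1 / R) := by field_simp
  have hxabs : |x| = |x * R| * (1 / R) := by
    conv_lhs => rw [hxeq]
    rw [abs_mul _ (1 / R), abs_of_pos (one_div_pos.2 hRpos)]
  have hxlow : (2 : ℝ) ^ (c - N - 1) ≤ |x| := by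
    have h1 := hzgrid.two_zpow_le_abs hz0
    have h2 : (2 : ℝ) ^ (-N) = 2 * 2 ^ (-N - 1) := by
      rw [zpow_sub_one₀ two_ne_zero]; ring
    have h3 : (2 : ℝ) ^ (-N - 1) ≤ |x * R| := by
      have := abs_sub_abs_le_abs_sub z (x * R)
      rw [abs_sub_comm z] at this
      linarith
    rw [hxabs, show c - N - 1 = -N - 1 + c by ring, zpow_add₀ two_ne_zero]
    exact mul_le_mul h3 hRlow (by positivity) (abs_nonneg _)
  have hugrid : IsGridPoint (c - N - 2 * p + 5) u := by
    rw [hu]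
    exact ((hx.isGridPoint hxlow).mono (by omega)).sub ((hzgrid.mul hC₁grid).mono (by omega))
  have hbgrid : IsGridPoint (c - N - 2 * p + 5) (z * C₂) :=
    (hzgrid.mul hC₂grid).mono (by omega)
  have hule : |u| ≤ (2 : ℝ) ^ (c - N - 2 * p + 5 + 2 * p - 3) := by
    have hsplit : u = (x * R - z) * (1 / R) + z * (1 / R - C₁) := by
      rw [hu]; nth_rewrite 1 [hxeq]; ring
    have hA : |(x * R - z) * (1 / R)| ≤ (2 : ℝ) ^ (c - N) := by
      rw [abs_mul, abs_of_pos (one_div_pos.2 hRpos), show c - N = -N - 1 + (c + 1) by ring,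
        zpow_add₀ two_ne_zero]
      exact mul_le_mul hzerr hRupp (by positivity) (by positivity)
    have hB : |z * (1 / R - C₁)| ≤ (2 : ℝ) ^ (c - N) := by
      rw [abs_mul, show c - N = p - N - 2 + (c - (p - 2)) by ring, zpow_add₀ two_ne_zero]
      exact mul_le_mul hzle hC₁err (abs_nonneg _) (by positivity)
    have hpos : (0 : ℝ) < 2 ^ (c - N) := by positivity
    rw [hsplit, show c - N - 2 * p + 5 + 2 * p - 3 = c - N + 2 by ring, zpow_add₀ two_ne_zero]
    refine (abs_add_le _ _).trans ?_
    norm_num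
    norm_num at hA hB
    linarith
  have hble : |z * C₂| ≤ (2 : ℝ) ^ (c - N - 2 * p + 5 + 2 * p - 4) := by
    rw [abs_mul, show c - N - 2 * p + 5 + 2 * p - 4 = p - N - 2 + (c - p + 3) by ring,
      zpow_add₀ two_ne_zero]
    exact mul_le_mul hzle hC₂le (abs_nonneg _) (by positivity)
  exact isFPN_error_terms hp (by omega) hugrid hbgrid hule hble hv₁ hp₁ ht₁
end
end

section
/- Accuracy of the truncated constant (gamma2_le): Assume p > 3, C is a positive real constant, R is a round-to-nearest of 1/C to p bits, R is a positive normal p-bit FPN, C₁ is a round-to-nearest of 1/R to p − 2 bits, C₁ is not exactly a power of 2 (C₁ ≠ 2^j for every integer j), and C₁ ≥ 2^(p−1)·λ. Then |C − C₁| ≤ 4·ulp(C₁). -/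
noncomputable section

/-- An FPN of magnitude at least `2^E` is an integer multiple of `2^(E-k+1)`. -/
theorem IsFPN.exists_eq_int_mul {emin k E : ℤ} {x : ℝ} (h : IsFPN emin k x)
    (hx : (2 : ℝ) ^ E ≤ x) : ∃ n : ℤ, x = (n : ℝ) * (2 : ℝ) ^ (E - k + 1) := by
  obtain ⟨m, e, hm, -, rfl⟩ := h
  have hlt : (2 : ℝ) ^ E < (2 : ℝ) ^ (k + e) := by
    rw [zpow_add₀ two_ne_zero]
    refine hx.trans_lt ?_
    gcongr
    exact (le_abs_self _).trans_lt hm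
  have hEe : E < k + e := (zpow_lt_zpow_iff_right₀ one_lt_two).1 hlt
  refine ⟨m * 2 ^ (e - (E - k + 1)).toNat, ?_⟩
  push_cast
  rw [← zpow_natCast, Int.toNat_of_nonneg (by omega), mul_assoc, ← zpow_add₀ two_ne_zero]
  congr 2
  ring

/-- Rounding to nearest into the interior of a binade in the normal range: the error is at most
half the spacing, and the result is at least one spacing away from the ends of the binade. -/
theorem RN.abs_sub_le_of_mem_binade {emin k E : ℤ} {a r : ℝ} (h : RN emin k a r) (hk : 1 ≤ k)
    (hE : emin ≤ E - k + 1) (hlo : (2 : ℝ) ^ E < r) (hhi : r < (2 : ℝ) ^ (E + 1)) :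
    |a - r| ≤ (2 : ℝ) ^ (E - k + 1) / 2 ∧ (2 : ℝ) ^ E + (2 : ℝ) ^ (E - k + 1) ≤ r ∧
      r + (2 : ℝ) ^ (E - k + 1) ≤ (2 : ℝ) ^ (E + 1) := by
  obtain ⟨hr, hmin⟩ := h
  obtain ⟨n, hn⟩ := hr.exists_eq_int_mul hlo.le
  obtain ⟨q, hq⟩ : ∃ q : ℤ, (q : ℝ) = (2 : ℝ) ^ (k - 1) :=
    ⟨2 ^ (k - 1).toNat, by
      push_cast
      rw [← zpow_natCast, Int.toNat_of_nonneg (by omega)]⟩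
  have hq2 : (2 : ℝ) ^ k = 2 * q := by
    rw [hq, ← zpow_one_add₀ two_ne_zero]
    congr 1
    ring
  have hEq : (2 : ℝ) ^ E = q * (2 : ℝ) ^ (E - k + 1) := by
    rw [hq, ← zpow_add₀ two_ne_zero]
    congr 1
    ring
  have hEq' : (2 : ℝ) ^ (E + 1) = 2 * q * (2 : ℝ) ^ (E - k + 1) := by
    rw [zpow_add_one₀ two_ne_zero, hEq]
    ring
  have hg : (0 : ℝ) < (2 : ℝ) ^ (E - k + 1) := by positivity
  have hq1 : (1 : ℝ) ≤ q := hq ▸ one_le_zpow₀ one_le_two (by omega)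
  have hqn : q + 1 ≤ n := by
    rw [hEq, hn] at hlo
    exact_mod_cast lt_of_mul_lt_mul_right hlo hg.le
  have hnq : n + 1 ≤ 2 * q := by
    rw [hEq', hn] at hhi
    exact_mod_cast lt_of_mul_lt_mul_right hhi hg.le
  have hqnR : (q : ℝ) + 1 ≤ n := by exact_mod_cast hqn
  have hnqR : (n : ℝ) + 1 ≤ 2 * q := by exact_mod_cast hnq
  have hup : IsFPN emin k (r + (2 : ℝ) ^ (E - k + 1)) := by
    rcases hnq.lt_or_eq with hlt | heq
    · refine ⟨n + 1, E - k + 1, ?_, hE, by rw [hn]; push_cast; ring⟩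
      have : (n : ℝ) + 1 < 2 * q := by exact_mod_cast hlt
      rw [hq2, abs_lt]
      push_cast
      constructor <;> linarith
    · refine ⟨1, E + 1, ?_, by omega, ?_⟩
      · rw [hq2]
        norm_num
        linarith
      · have : (n : ℝ) + 1 = 2 * q := by exact_mod_cast heq
        rw [hn, hEq', ← this]
        push_cast
        ring
  have hdown : IsFPN emin k (r - (2 : ℝ) ^ (E - k + 1)) := by
    refine ⟨n - 1, E - k + 1, ?_, hE, by rw [hn]; push_cast; ring⟩
    rw [hq2, abs_lt]
    push_cast
    constructor <;> linarith
  refine ⟨?_, ?_, ?_⟩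
  · have h₁ := sq_le_sq.2 (hmin _ hup)
    have h₂ := sq_le_sq.2 (hmin _ hdown)
    rw [abs_le]
    constructor <;> nlinarith
  · rw [hEq, hn]
    nlinarith
  · rw [hEq', hn]
    nlinarith

/-- Accuracy of the truncated constant (gamma2_le). -/
theorem gamma2_le (p emin : ℤ) (hp : 3 < p)
    (C R C₁ : ℝ) (hC : 0 < C)
    (hR : RN emin p (1 / C) R)
    (hRpos : 0 < R) (hRnorm : IsNormalFPN emin p R)
    (hC₁ : RN emin (p - 2) (1 / R) C₁)
    (hC₁pow : ∀ j : ℤ, C₁ ≠ (2 : ℝ) ^ j)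
    (hC₁big : (2 : ℝ) ^ (p - 1) * (2 : ℝ) ^ emin ≤ C₁) :
    |C - C₁| ≤ 4 * ulp p C₁ := by
  set E := Int.log 2 |C₁| with hEdef
  have hC₁pos : 0 < C₁ := lt_of_lt_of_le (by positivity) hC₁big
  rw [abs_of_pos hC₁pos] at hEdef
  have hlo : (2 : ℝ) ^ E < C₁ := by
    refine lt_of_le_of_ne ?_ (hC₁pow E).symm
    simpa [hEdef] using Int.zpow_log_le_self (b := 2) one_lt_two hC₁pos
  have hhi : C₁ < (2 : ℝ) ^ (E + 1) := by
    simpa [hEdef] using Int.lt_zpow_succ_log_self (b := 2) one_lt_two C₁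
  have hEmin : p - 1 + emin < E + 1 := by
    rw [← zpow_add₀ two_ne_zero] at hC₁big
    exact (zpow_lt_zpow_iff_right₀ one_lt_two).1 (hC₁big.trans_lt hhi)
  obtain ⟨herr₁, hlo₁, hhi₁⟩ :=
    hC₁.abs_sub_le_of_mem_binade (by omega) (by omega) hlo hhi
  have hspacing : (2 : ℝ) ^ (E - (p - 2) + 1) = 4 * ulp p C₁ := by
    rw [ulp, abs_of_pos hC₁pos, ← hEdef, show E - (p - 2) + 1 = 2 + (E - p + 1) by ring,
      zpow_add₀ two_ne_zero]
    norm_num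
  have hulp : 0 < ulp p C₁ := by
    unfold ulp
    positivity
  rw [hspacing] at herr₁ hlo₁ hhi₁
  rw [abs_le] at herr₁
  have hinv_lo : (2 : ℝ) ^ E < 1 / R := by linarith
  have hinv_hi : 1 / R < (2 : ℝ) ^ (E + 1) := by linarith
  have hR_lo : (2 : ℝ) ^ (-E - 1) < R := by
    rw [show -E - 1 = -(E + 1) by ring, zpow_neg]
    rw [one_div] at hinv_hi
    exact inv_lt_of_inv_lt₀ hRpos hinv_hi
  have hR_hi : R < (2 : ℝ) ^ (-E - 1 + 1) := by
    rw [show -E - 1 + 1 = -E by ring, zpow_neg]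
    rw [one_div] at hinv_lo
    exact (lt_inv_comm₀ (by positivity) hRpos).1 hinv_lo
  have hRmin : emin ≤ -E - 1 - p + 1 := by
    obtain ⟨m, e, hm, -, he, hRme⟩ := hRnorm
    have : (2 : ℝ) ^ (p - 1 + e) < (2 : ℝ) ^ (-E - 1 + 1) := by
      refine lt_of_le_of_lt ?_ hR_hi
      rw [← abs_of_pos hRpos, hRme, abs_mul, abs_of_pos (zpow_pos (two_pos : (0 : ℝ) < 2) e),
        zpow_add₀ two_ne_zero]
      gcongr
    have := (zpow_lt_zpow_iff_right₀ one_lt_two).1 this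
    omega
  obtain ⟨herr₂, hlo₂, -⟩ := hR.abs_sub_le_of_mem_binade (by omega) hRmin hR_lo hR_hi
  have hC_hi : C ≤ (2 : ℝ) ^ (E + 1) := by
    have hg : (0 : ℝ) < (2 : ℝ) ^ (-E - 1 - p + 1) := by positivity
    have : (2 : ℝ) ^ (-E - 1) ≤ 1 / C := by linarith [(abs_le.1 herr₂).1]
    rw [show -E - 1 = -(E + 1) by ring, zpow_neg, one_div] at this
    exact (inv_le_inv₀ (by positivity) hC).1 this
  have herrC : |C - 1 / R| ≤ ulp p C₁ := by
    have hfac : C - 1 / R = -(C * (1 / R) * (1 / C - R)) := by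
      field_simp
      ring
    have hprod : (2 : ℝ) ^ (E + 1) * (2 : ℝ) ^ (E + 1) * ((2 : ℝ) ^ (-E - 1 - p + 1) / 2) =
        ulp p C₁ := by
      rw [ulp, abs_of_pos hC₁pos, ← hEdef, div_eq_mul_inv,
        ← zpow_sub_one₀ two_ne_zero, ← zpow_add₀ two_ne_zero,
        ← zpow_add₀ two_ne_zero]
      congr 1
      ring
    rw [hfac, abs_neg, abs_mul, abs_of_pos (by positivity : 0 < C * (1 / R)), ← hprod]
    gcongr
  rw [abs_le] at herrC ⊢
  constructor <;> linarith
end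
end

section
/- The special case z = 2^(−N) of the first reduction step: Let p > 3 and N be integers, let C₁ be a (p−2)-bit FPN (so C₁ = m·2^e with 2^(p−3) ≤ m < 2^(p−2)) that is not exactly a power of 2, and let x be a p-bit FPN with C₁·2^(−N)/(1 + 2^(2−p)) ≤ x ≤ 2·C₁·2^(−N), where no underflow occurs (C₁ ≥ 2^(p+max(−1,N))·λ and 2^(−N) is a p-bit FPN). Then x − C₁·2^(−N) is a p-bit FPN. -/
noncomputable section

theorem two_zpow_eq_four_mul (a : ℤ) : (2 : ℝ) ^ a = 4 * (2 : ℝ) ^ (a - 2) := by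
  rw [zpow_sub₀ two_ne_zero]
  norm_num
  ring

/-- The special case `z = 2^(-N)` of the first reduction step. -/
theorem special_case_z_pow (p emin N : ℤ) (hp : 3 < p)
    (m e : ℤ) (C₁ x : ℝ)
    (hm1 : (2 : ℝ) ^ (p - 3) ≤ (m : ℝ)) (hm2 : (m : ℝ) < (2 : ℝ) ^ (p - 2))
    (hC₁ : C₁ = (m : ℝ) * (2 : ℝ) ^ e) (hemin : emin ≤ e)
    (hC₁pow : ∀ j : ℤ, C₁ ≠ (2 : ℝ) ^ j)
    (hx : IsFPN emin p x)
    (hx1 : C₁ * (2 : ℝ) ^ (-N) / (1 + (2 : ℝ) ^ (2 - p)) ≤ x)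
    (hx2 : x ≤ 2 * (C₁ * (2 : ℝ) ^ (-N)))
    (hC₁big : (2 : ℝ) ^ (p + max (-1) N) * (2 : ℝ) ^ emin ≤ C₁)
    (hN : IsFPN emin p ((2 : ℝ) ^ (-N))) :
    IsFPN emin p (x - C₁ * (2 : ℝ) ^ (-N)) := by
  have two_pos : (0 : ℝ) < 2 := two_pos
  have one_lt : (1 : ℝ) < 2 := one_lt_two
  obtain ⟨q, hq⟩ : ∃ q : ℕ, p = q + 3 := ⟨(p - 3).toNat, by omega⟩
  have hpow : (2 : ℝ) ^ (p - 3) = (2 : ℝ) ^ q := by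
    rw [← zpow_natCast]; congr 1; omega
  have hm_lower : (2 : ℝ) ^ (p - 3) + 1 ≤ (m : ℝ) := by
    have hne : (m : ℝ) ≠ (2 : ℝ) ^ (p - 3) := fun h =>
      hC₁pow (p - 3 + e) (by rw [hC₁, h, zpow_add₀ two_pos.ne'])
    have hlt := lt_of_le_of_ne hm1 hne.symm
    rw [hpow] at hlt ⊢
    have hlt' : (2 : ℤ) ^ q < m := by exact_mod_cast hlt
    exact_mod_cast Int.add_one_le_of_lt hlt'
  set f : ℤ := e - N with hf
  have hy : C₁ * (2 : ℝ) ^ (-N) = m * (2 : ℝ) ^ f := by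
    rw [hC₁, mul_assoc, ← zpow_add₀ two_pos.ne', hf, sub_eq_add_neg]
  rw [hy] at hx1 hx2 ⊢
  have hfpos : (0 : ℝ) < (2 : ℝ) ^ f := by positivity
  -- The exponent of `C₁ * 2 ^ (-N)` stays away from the underflow range.
  have hf_emin : emin + 2 ≤ f := by
    have h : (2 : ℝ) ^ (p + max (-1) N + emin) < (2 : ℝ) ^ (p - 2 + e) := by
      rw [zpow_add₀ two_pos.ne' (p + max (-1) N), zpow_add₀ two_pos.ne' (p - 2)]
      refine hC₁big.trans_lt ?_
      rw [hC₁]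
      gcongr
    have := (zpow_lt_zpow_iff_right₀ one_lt).1 h
    have := le_max_right (-1) N
    omega
  have hx_lower : (2 : ℝ) ^ (p - 3 + f) < x := by
    refine lt_of_lt_of_le ?_ hx1
    have hprod : (2 : ℝ) ^ (p - 3) * (2 : ℝ) ^ (2 - p) = 1 / 2 := by
      rw [← zpow_add₀ two_pos.ne', show p - 3 + (2 - p) = -1 by ring]; norm_num
    rw [lt_div_iff₀ (by positivity), zpow_add₀ two_pos.ne']
    calc (2 : ℝ) ^ (p - 3) * (2 : ℝ) ^ f * (1 + (2 : ℝ) ^ (2 - p))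
        = ((2 : ℝ) ^ (p - 3) + (2 : ℝ) ^ (p - 3) * (2 : ℝ) ^ (2 - p)) * (2 : ℝ) ^ f := by ring
      _ < m * (2 : ℝ) ^ f := by
        rw [hprod]
        exact mul_lt_mul_of_pos_right (by linarith) hfpos
  have hxpos : 0 < x := lt_trans (by positivity) hx_lower
  obtain ⟨n, g, hn, -, rfl⟩ := hx
  -- The last bit of `x` has weight at least `2 ^ (f - 2)`.
  have hg : f - 2 ≤ g := by
    have h : (2 : ℝ) ^ (p - 3 + f) < (2 : ℝ) ^ (p + g) := by
      refine hx_lower.trans ?_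
      rw [zpow_add₀ two_pos.ne' p]
      exact mul_lt_mul_of_pos_right ((le_abs_self _).trans_lt hn) (by positivity)
    have := (zpow_lt_zpow_iff_right₀ one_lt).1 h
    omega
  obtain ⟨k, hk⟩ : ∃ k : ℕ, g = k + (f - 2) := ⟨(g - (f - 2)).toNat, by omega⟩
  have hf4 := two_zpow_eq_four_mul f
  have hdiff : (n : ℝ) * (2 : ℝ) ^ g - m * (2 : ℝ) ^ f
      = ((n * 2 ^ k - 4 * m : ℤ) : ℝ) * (2 : ℝ) ^ (f - 2) := by
    rw [hf4, hk, zpow_add₀ two_pos.ne', zpow_natCast]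
    push_cast
    ring
  refine ⟨n * 2 ^ k - 4 * m, f - 2, ?_, by omega, hdiff⟩
  have hupos : (0 : ℝ) < (2 : ℝ) ^ (f - 2) := by positivity
  have habs : |(n : ℝ) * (2 : ℝ) ^ g - m * (2 : ℝ) ^ f| ≤ m * (2 : ℝ) ^ f :=
    abs_le.2 ⟨by linarith, by linarith⟩
  rw [hdiff, abs_mul, abs_of_pos hupos, hf4, ← mul_assoc] at habs
  have hp4 := two_zpow_eq_four_mul p
  linarith [le_of_mul_le_mul_right habs hupos]
end
end
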